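/- arXiv:1212.4512 — 3 statements merged into one kernel-verified Lean document; each statement's English description precedes it below -/
import Mathlib

section
/- The chord-averaging operator T of the hit-and-run chain is self-adjoint on L₂(μ): for all bounded measurable g₁, g₂ : K × S^{d-1} → ℝ, ⟨Tg₁, g₂⟩_μ = ⟨g₁, Tg₂⟩_μ, where ⟨g₁,g₂⟩_μ = κ_d^{-1} ∫_K ∫_{S^{d-1}} g₁(x,θ) g₂(x,θ) dθ dπ(x) and Tg(x,θ) = ℓ(x,θ)^{-1} ∫_{L(x,θ)} g(y,θ) ρ(y) dy. -/
open MeasureTheory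

/-- The total chord weight `ℓ(x,θ)`, as the line integral `∫_ℝ 1_K(x+sθ) ρ(x+sθ) ds`. -/
noncomputable def chordWeight {d : ℕ} (K : Set (EuclideanSpace ℝ (Fin d)))
    (ρ : EuclideanSpace ℝ (Fin d) → ℝ) (x θ : EuclideanSpace ℝ (Fin d)) : ℝ :=
  ∫ s : ℝ, Set.indicator K ρ (x + s • θ)

/-- The chord-averaging operator of the hit-and-run chain:
`T g (x,θ) = ℓ(x,θ)⁻¹ ∫_{L(x,θ)} g(y,θ) ρ(y) dy`. -/
noncomputable def harT {d : ℕ} (K : Set (EuclideanSpace ℝ (Fin d)))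
    (ρ : EuclideanSpace ℝ (Fin d) → ℝ)
    (g : EuclideanSpace ℝ (Fin d) → EuclideanSpace ℝ (Fin d) → ℝ)
    (x θ : EuclideanSpace ℝ (Fin d)) : ℝ :=
  (chordWeight K ρ x θ)⁻¹ *
    ∫ s : ℝ, Set.indicator K (fun y => g y θ * ρ y) (x + s • θ)

/-- The surface measure on the unit sphere `S^{d-1} ⊂ ℝ^d`, realized as the
`(d-1)`-dimensional Hausdorff measure restricted to the sphere. -/
noncomputable def sphereMeasure (d : ℕ) : Measure (EuclideanSpace ℝ (Fin d)) :=
  (μH[(d : ℝ) - 1]).restrict (Metric.sphere (0 : EuclideanSpace ℝ (Fin d)) 1)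

/-- `κ_d`, the total surface measure of the unit sphere `S^{d-1}`. -/
noncomputable def kappa (d : ℕ) : ℝ := (sphereMeasure d Set.univ).toReal

/-- The probability measure `π` on `K` with density `ρ / ∫_K ρ` w.r.t. Lebesgue measure. -/
noncomputable def piMeasure {d : ℕ} (K : Set (EuclideanSpace ℝ (Fin d)))
    (ρ : EuclideanSpace ℝ (Fin d) → ℝ) : Measure (EuclideanSpace ℝ (Fin d)) :=
  (∫⁻ x in K, ENNReal.ofReal (ρ x))⁻¹ •
    ((volume.restrict K).withDensity fun x => ENNReal.ofReal (ρ x))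


/-!
Fix a direction `θ` and write `r` for the density and `ℓ` for its line integrals in direction `θ`.
Then `∫ r(x) Ta(x) b(x) dx` is the integral of `a(x + sθ) b(x)` over pairs `(x, s)` against the
density `r(x) r(x + sθ) / ℓ(x)`. Since `ℓ` is constant along lines, this density is invariant under
`(x, s) ↦ (x + sθ, -s)`, which exchanges the two points, preserves the product measure, and
interchanges the roles of `a` and `b`. The sphere has finite area and `T` preserves bounds, so
Fubini's theorem lets one integrate this symmetry over `θ`.
-/

open Metric Module Filter
open scoped Topology ENNReal

section Lines

variable {E : Type*} [AddCommGroup E] [Module ℝ E]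

/-- The integral of `f` over the line `x + ℝθ`, parametrized by `s ↦ x + sθ`. -/
noncomputable def lineIntegral (f : E → ℝ) (x θ : E) : ℝ := ∫ s : ℝ, f (x + s • θ)

/-- The mean of `a` over the line `x + ℝθ` with respect to the density `r` on that line; it is `0`
when `r` has integral `0` over the line or is not integrable on it. -/
noncomputable def lineAverage (r a : E → ℝ) (x θ : E) : ℝ :=
  (lineIntegral r x θ)⁻¹ * lineIntegral (fun y => a y * r y) x θ

/-- The unnormalized joint density, at `(x, s)`, of the event that a stationary chain is at `x` and
moves along the line `x + ℝθ` to `x + sθ`. -/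
noncomputable def linePairDensity (r : E → ℝ) (θ : E) (p : E × ℝ) : ℝ :=
  (lineIntegral r p.1 θ)⁻¹ * r p.1 * r (p.1 + p.2 • θ)

theorem lineIntegral_add_smul (f : E → ℝ) (x θ : E) (t : ℝ) :
    lineIntegral f (x + t • θ) θ = lineIntegral f x θ := by
  simpa only [lineIntegral, add_smul, add_assoc] using
    integral_add_left_eq_self (fun s : ℝ => f (x + s • θ)) t

theorem lineIntegral_nonneg {r : E → ℝ} (hr : ∀ y, 0 ≤ r y) (x θ : E) :
    0 ≤ lineIntegral r x θ :=
  integral_nonneg fun _ => hr _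

theorem linePairDensity_nonneg {r : E → ℝ} (hr : ∀ y, 0 ≤ r y) (θ : E) (p : E × ℝ) :
    0 ≤ linePairDensity r θ p :=
  mul_nonneg (mul_nonneg (inv_nonneg.2 (lineIntegral_nonneg hr _ _)) (hr _)) (hr _)

theorem integrable_linePairDensity_right (r : E → ℝ) (x θ : E) :
    Integrable fun s : ℝ => linePairDensity r θ (x, s) := by
  by_cases hline : Integrable fun s : ℝ => r (x + s • θ)
  · exact hline.const_mul ((lineIntegral r x θ)⁻¹ * r x)
  · have hweight : lineIntegral r x θ = 0 := integral_undef hline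
    simp [linePairDensity, hweight]

theorem integral_linePairDensity_right_le {r : E → ℝ} (hr : ∀ y, 0 ≤ r y) (x θ : E) :
    ∫ s : ℝ, linePairDensity r θ (x, s) ≤ r x := by
  calc ∫ s : ℝ, linePairDensity r θ (x, s)
      = r x * ((lineIntegral r x θ)⁻¹ * lineIntegral r x θ) := by
        simp only [linePairDensity, integral_const_mul, lineIntegral]
        ring
    _ ≤ r x * 1 := mul_le_mul_of_nonneg_left inv_mul_le_one (hr x)
    _ = r x := mul_one _

theorem integral_linePairDensity_mul (r a b : E → ℝ) (x θ : E) :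
    ∫ s : ℝ, linePairDensity r θ (x, s) * (a (x + s • θ) * b x) =
      r x * (lineAverage r a x θ * b x) := by
  calc ∫ s : ℝ, linePairDensity r θ (x, s) * (a (x + s • θ) * b x)
      = ∫ s : ℝ, (r x * (lineIntegral r x θ)⁻¹ * b x) * (a (x + s • θ) * r (x + s • θ)) := by
        congr 1 with s
        simp only [linePairDensity]
        ring
    _ = r x * (lineAverage r a x θ * b x) := by
        rw [integral_const_mul, lineAverage, lineIntegral.eq_1 (fun y => a y * r y)]
        ring

theorem abs_lineAverage_le {r a : E → ℝ} {C : ℝ} (hr : ∀ y, 0 ≤ r y) (ha : ∀ y, |a y| ≤ C)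
    (x θ : E) : |lineAverage r a x θ| ≤ C := by
  have hC : 0 ≤ C := (abs_nonneg _).trans (ha x)
  by_cases hline : Integrable fun s : ℝ => r (x + s • θ)
  · have hnum : |lineIntegral (fun y => a y * r y) x θ| ≤ C * lineIntegral r x θ := by
      rw [lineIntegral, lineIntegral, ← integral_const_mul, ← Real.norm_eq_abs]
      refine norm_integral_le_of_norm_le (hline.const_mul C) (.of_forall fun s => ?_)
      rw [Real.norm_eq_abs, abs_mul, abs_of_nonneg (hr _)]
      exact mul_le_mul_of_nonneg_right (ha _) (hr _)
    rw [lineAverage, abs_mul, abs_inv, abs_of_nonneg (lineIntegral_nonneg hr x θ), inv_mul_eq_div]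
    exact div_le_of_le_mul₀ (lineIntegral_nonneg hr x θ) hC hnum
  · have hweight : lineIntegral r x θ = 0 := integral_undef hline
    simpa [lineAverage, hweight] using hC

variable [MeasurableSpace E] [MeasurableAdd₂ E]

section FixedDirection

variable [MeasurableSMul ℝ E]

/-- The involution `(x, s) ↦ (x + sθ, -s)` exchanging the two ends of a segment of direction `θ`,
where `(x, s)` encodes the segment from `x` to `x + sθ`. -/
def lineFlip (θ : E) : E × ℝ ≃ᵐ E × ℝ :=
  .ofInvolutive (fun p => (p.1 + p.2 • θ, -p.2)) (fun p => by simp) (by fun_prop)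

theorem lineFlip_apply (θ : E) (p : E × ℝ) : lineFlip θ p = (p.1 + p.2 • θ, -p.2) := rfl

theorem measurePreserving_lineFlip (μ : Measure E) [SFinite μ] [μ.IsAddRightInvariant] (θ : E) :
    MeasurePreserving (lineFlip θ) (μ.prod volume) (μ.prod volume) := by
  have hskew : MeasurePreserving (fun q : ℝ × E => (-q.1, q.2 + q.1 • θ))
      (volume.prod μ) (volume.prod μ) :=
    (Measure.measurePreserving_neg volume).skew_product (g := fun s x => x + s • θ)
      (by fun_prop) (.of_forall fun s => map_add_right_eq_self μ (s • θ))
  exact Measure.measurePreserving_swap.comp (hskew.comp Measure.measurePreserving_swap)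

theorem linePairDensity_lineFlip (r : E → ℝ) (θ : E) (p : E × ℝ) :
    linePairDensity r θ (lineFlip θ p) = linePairDensity r θ p := by
  simp only [linePairDensity, lineFlip_apply, lineIntegral_add_smul, neg_smul,
    add_neg_cancel_right]
  ring

theorem integral_linePairDensity_mul_comm (μ : Measure E) [SFinite μ] [μ.IsAddRightInvariant]
    (r a b : E → ℝ) (θ : E) :
    ∫ p, linePairDensity r θ p * (a (p.1 + p.2 • θ) * b p.1) ∂(μ.prod volume) =
      ∫ p, linePairDensity r θ p * (b (p.1 + p.2 • θ) * a p.1) ∂(μ.prod volume) := by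
  rw [← (measurePreserving_lineFlip μ θ).integral_comp']
  congr 1 with p
  rw [linePairDensity_lineFlip]
  simp only [lineFlip_apply, neg_smul, add_neg_cancel_right, mul_comm (a p.1)]

end FixedDirection

variable [MeasurableSMul₂ ℝ E]

theorem measurable_lineIntegral {f : E → E → ℝ} (hf : Measurable fun p : E × E => f p.1 p.2) :
    Measurable fun p : E × E => lineIntegral (fun y => f y p.2) p.1 p.2 := by
  have hline : Measurable fun q : (E × E) × ℝ => (q.1.1 + q.2 • q.1.2, q.1.2) := by fun_prop
  exact (hf.comp hline).stronglyMeasurable.integral_prod_right'.measurable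

theorem measurable_lineAverage {r : E → ℝ} {g : E → E → ℝ} (hr : Measurable r)
    (hg : Measurable fun p : E × E => g p.1 p.2) :
    Measurable fun p : E × E => lineAverage r (fun y => g y p.2) p.1 p.2 := by
  have hr' : Measurable fun p : E × E => r p.1 := hr.comp measurable_fst
  exact (measurable_lineIntegral (f := fun y _ => r y) hr').inv.mul
    (measurable_lineIntegral (f := fun y θ => g y θ * r y) (hg.mul hr'))

theorem measurable_linePairDensity {r : E → ℝ} (hr : Measurable r) (θ : E) :
    Measurable (linePairDensity r θ) := by
  have hweight : Measurable fun p : E × ℝ => lineIntegral r p.1 θ :=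
    (measurable_lineIntegral (f := fun y _ => r y) (hr.comp measurable_fst)).comp
      (measurable_fst.prodMk measurable_const)
  have hline : Measurable fun p : E × ℝ => p.1 + p.2 • θ := by fun_prop
  exact (hweight.inv.mul (hr.comp measurable_fst)).mul (hr.comp hline)

theorem integrable_linePairDensity {μ : Measure E} [SFinite μ] {r : E → ℝ} (hr : ∀ y, 0 ≤ r y)
    (hrm : Measurable r) (hri : Integrable r μ) (θ : E) :
    Integrable (linePairDensity r θ) (μ.prod volume) := by
  have hmeas := measurable_linePairDensity hrm θ
  refine (integrable_prod_iff hmeas.aestronglyMeasurable).2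
    ⟨.of_forall fun x => integrable_linePairDensity_right r x θ, ?_⟩
  simp only [Real.norm_of_nonneg (linePairDensity_nonneg hr θ _)]
  refine hri.mono' hmeas.stronglyMeasurable.integral_prod_right'.aestronglyMeasurable
    (.of_forall fun x => ?_)
  rw [Real.norm_of_nonneg (integral_nonneg fun _ => linePairDensity_nonneg hr θ _)]
  exact integral_linePairDensity_right_le hr x θ

theorem integral_lineAverage_mul_eq_integral_prod {μ : Measure E} [SFinite μ] {r a b : E → ℝ}
    {A B : ℝ} (hr : ∀ y, 0 ≤ r y) (hrm : Measurable r) (hri : Integrable r μ)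
    (ham : Measurable a) (hbm : Measurable b) (ha : ∀ y, |a y| ≤ A) (hb : ∀ y, |b y| ≤ B) (θ : E) :
    ∫ x, r x * (lineAverage r a x θ * b x) ∂μ =
      ∫ p, linePairDensity r θ p * (a (p.1 + p.2 • θ) * b p.1) ∂(μ.prod volume) := by
  have hline : Measurable fun p : E × ℝ => p.1 + p.2 • θ := by fun_prop
  have hint : Integrable (fun p : E × ℝ => linePairDensity r θ p * (a (p.1 + p.2 • θ) * b p.1))
      (μ.prod volume) := by
    refine (integrable_linePairDensity hr hrm hri θ).mul_bdd (c := A * B)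
      ((ham.comp hline).mul (hbm.comp measurable_fst)).aestronglyMeasurable
      (.of_forall fun p => ?_)
    rw [norm_mul]
    exact mul_le_mul (ha _) (hb _) (norm_nonneg _) ((abs_nonneg _).trans (ha p.1))
  rw [integral_prod _ hint]
  simp only [integral_linePairDensity_mul]

theorem integral_lineAverage_mul_comm {μ : Measure E} [SFinite μ] [μ.IsAddRightInvariant]
    {r a b : E → ℝ} {A B : ℝ} (hr : ∀ y, 0 ≤ r y) (hrm : Measurable r) (hri : Integrable r μ)
    (ham : Measurable a) (hbm : Measurable b) (ha : ∀ y, |a y| ≤ A) (hb : ∀ y, |b y| ≤ B) (θ : E) :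
    ∫ x, r x * (lineAverage r a x θ * b x) ∂μ = ∫ x, r x * (a x * lineAverage r b x θ) ∂μ := by
  simp only [mul_comm (a _)]
  rw [integral_lineAverage_mul_eq_integral_prod hr hrm hri ham hbm ha hb,
    integral_lineAverage_mul_eq_integral_prod hr hrm hri hbm ham hb ha,
    integral_linePairDensity_mul_comm]

theorem integrable_lineAverage_mul {m : Measure (E × E)} [IsFiniteMeasure m] {r : E → ℝ}
    {g₁ g₂ : E → E → ℝ} {A B : ℝ} (hr : ∀ y, 0 ≤ r y) (hrm : Measurable r)
    (hg₁m : Measurable fun p : E × E => g₁ p.1 p.2)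
    (hg₂m : Measurable fun p : E × E => g₂ p.1 p.2)
    (hg₁ : ∀ y η, |g₁ y η| ≤ A) (hg₂ : ∀ y η, |g₂ y η| ≤ B) :
    Integrable (fun p : E × E => lineAverage r (fun y => g₁ y p.2) p.1 p.2 * g₂ p.1 p.2) m := by
  refine .of_bound ((measurable_lineAverage hrm hg₁m).mul hg₂m).aestronglyMeasurable (A * B)
    (.of_forall fun p => ?_)
  have havg := abs_lineAverage_le hr (fun y => hg₁ y p.2) p.1 p.2
  rw [norm_mul]
  exact mul_le_mul havg (hg₂ _ _) (norm_nonneg _) ((abs_nonneg _).trans havg)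

end Lines

section Sphere

theorem exists_mem_nhds_hausdorffMeasure_image_lt_top {F E : Type*} [NormedAddCommGroup F]
    [NormedSpace ℝ F] [FiniteDimensional ℝ F] [NormedAddCommGroup E] [NormedSpace ℝ E]
    [MeasurableSpace E] [BorelSpace E] {f : F → E} {y : F} (hf : ContDiffAt ℝ 1 f y) :
    ∃ t ∈ 𝓝 y, μH[finrank ℝ F] (f '' t) < ∞ := by
  borelize F
  obtain ⟨C, u, hu, hLip⟩ := hf.exists_lipschitzOnWith
  obtain ⟨v, hv, hvfin⟩ := (μH[finrank ℝ F] : Measure F).finiteAt_nhds y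
  refine ⟨u ∩ v, inter_mem hu hv, ?_⟩
  calc μH[finrank ℝ F] (f '' (u ∩ v))
      ≤ (C : ℝ≥0∞) ^ (finrank ℝ F : ℝ) * μH[finrank ℝ F] (u ∩ v) :=
        (hLip.mono Set.inter_subset_left).hausdorffMeasure_image_le (Nat.cast_nonneg _)
    _ ≤ (C : ℝ≥0∞) ^ (finrank ℝ F : ℝ) * μH[finrank ℝ F] v := by
        gcongr
        exact Set.inter_subset_right
    _ < ∞ := ENNReal.mul_lt_top
        (ENNReal.rpow_lt_top_of_nonneg (Nat.cast_nonneg _) ENNReal.coe_ne_top) hvfin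

variable {E : Type*} [NormedAddCommGroup E] [InnerProductSpace ℝ E]

theorem map_stereoInvFunAux_nhds_zero {v : E} (hv : ‖v‖ = 1) :
    map (fun w : (ℝ ∙ v)ᗮ => stereoInvFunAux v w) (𝓝 0) = 𝓝[sphere 0 1] (-v) := by
  have hzero : ((stereographic hv).symm 0 : E) = -v := by
    change (stereoInvFun hv 0 : E) = -v
    simp [smul_smul]
  rw [← hzero, nhdsWithin_eq_map_subtype_coe (Subtype.coe_prop _), Subtype.coe_eta,
    ← (stereographic hv).symm.map_nhds_eq (Set.mem_univ 0), map_map]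
  rfl

theorem hausdorffMeasure_sphere_lt_top [FiniteDimensional ℝ E] [MeasurableSpace E] [BorelSpace E] :
    μH[(finrank ℝ E : ℝ) - 1] (sphere (0 : E) 1) < ∞ := by
  refine (isCompact_sphere 0 1).measure_lt_top_of_nhdsWithin fun x hx => ?_
  have hnorm : ‖-x‖ = 1 := by simpa using hx
  have hdim : (finrank ℝ E : ℝ) - 1 = finrank ℝ (ℝ ∙ (-x))ᗮ := by
    rw [← (ℝ ∙ (-x)).finrank_add_finrank_orthogonal,
      finrank_span_singleton (norm_ne_zero_iff.1 (hnorm ▸ one_ne_zero))]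
    push_cast
    ring
  have hsmooth : ContDiff ℝ 1 fun w : (ℝ ∙ (-x))ᗮ => stereoInvFunAux (-x) w :=
    contDiff_stereoInvFunAux.comp (ℝ ∙ (-x))ᗮ.subtypeL.contDiff
  obtain ⟨t, ht, htfin⟩ := exists_mem_nhds_hausdorffMeasure_image_lt_top hsmooth.contDiffAt
  rw [hdim]
  have hnhds := image_mem_map (m := fun w : (ℝ ∙ (-x))ᗮ => stereoInvFunAux (-x) w) ht
  rw [map_stereoInvFunAux_nhds_zero hnorm, neg_neg] at hnhds
  exact ⟨_, hnhds, htfin⟩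

end Sphere

section HitAndRun

variable {d : ℕ} {K : Set (EuclideanSpace ℝ (Fin d))} {ρ : EuclideanSpace ℝ (Fin d) → ℝ}

theorem harT_eq_lineAverage (K : Set (EuclideanSpace ℝ (Fin d)))
    (ρ : EuclideanSpace ℝ (Fin d) → ℝ)
    (g : EuclideanSpace ℝ (Fin d) → EuclideanSpace ℝ (Fin d) → ℝ)
    (x θ : EuclideanSpace ℝ (Fin d)) :
    harT K ρ g x θ = lineAverage (K.indicator ρ) (fun y => g y θ) x θ := by
  simp only [harT, chordWeight, lineAverage, lineIntegral, Set.indicator_mul_right]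

theorem isProbabilityMeasure_piMeasure (hρ0 : ∀ y, 0 ≤ ρ y) (hρint : IntegrableOn ρ K volume)
    (hρpos : 0 < ∫ x in K, ρ x) : IsProbabilityMeasure (piMeasure K ρ) := by
  have hmass : ∫⁻ x in K, ENNReal.ofReal (ρ x) ≠ 0 := by
    rw [← ofReal_integral_eq_lintegral_ofReal hρint (.of_forall hρ0)]
    exact (ENNReal.ofReal_pos.2 hρpos).ne'
  constructor
  rw [piMeasure, Measure.smul_apply, withDensity_apply _ .univ, Measure.restrict_univ, smul_eq_mul]
  exact ENNReal.inv_mul_cancel hmass hρint.lintegral_lt_top.ne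

theorem integral_piMeasure (hK : MeasurableSet K) (hρ0 : ∀ y, 0 ≤ ρ y) (hρ : Measurable ρ)
    (f : EuclideanSpace ℝ (Fin d) → ℝ) :
    ∫ x, f x ∂(piMeasure K ρ) = ((∫⁻ x in K, ENNReal.ofReal (ρ x))⁻¹).toReal *
      ∫ x, K.indicator ρ x * f x := by
  rw [piMeasure, integral_smul_measure, integral_withDensity_eq_integral_toReal_smul
    hρ.ennreal_ofReal (.of_forall fun _ => ENNReal.ofReal_lt_top), ← integral_indicator hK]
  simp only [ENNReal.toReal_ofReal (hρ0 _), smul_eq_mul, Set.indicator_mul_left]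

theorem integral_harT_mul_comm (hK : MeasurableSet K) (hρ0 : ∀ y, 0 ≤ ρ y)
    (hρmeas : Measurable ρ) (hρint : IntegrableOn ρ K volume)
    {g₁ g₂ : EuclideanSpace ℝ (Fin d) → EuclideanSpace ℝ (Fin d) → ℝ} {A B : ℝ}
    {θ : EuclideanSpace ℝ (Fin d)} (hg₁meas : Measurable fun x => g₁ x θ)
    (hg₂meas : Measurable fun x => g₂ x θ) (hg₁ : ∀ y, |g₁ y θ| ≤ A) (hg₂ : ∀ y, |g₂ y θ| ≤ B) :
    ∫ x, harT K ρ g₁ x θ * g₂ x θ ∂(piMeasure K ρ) =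
      ∫ x, g₁ x θ * harT K ρ g₂ x θ ∂(piMeasure K ρ) := by
  simp only [integral_piMeasure hK hρ0 hρmeas, harT_eq_lineAverage]
  rw [integral_lineAverage_mul_comm (Set.indicator_nonneg fun y _ => hρ0 y)
    (hρmeas.indicator hK) ((integrable_indicator_iff hK).2 hρint) hg₁meas hg₂meas hg₁ hg₂]

theorem integrable_harT_mul {m : Measure (EuclideanSpace ℝ (Fin d) × EuclideanSpace ℝ (Fin d))}
    [IsFiniteMeasure m] (hK : MeasurableSet K) (hρ0 : ∀ y, 0 ≤ ρ y) (hρmeas : Measurable ρ)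
    {g₁ g₂ : EuclideanSpace ℝ (Fin d) → EuclideanSpace ℝ (Fin d) → ℝ}
    (hg₁meas : Measurable fun p : EuclideanSpace ℝ (Fin d) × EuclideanSpace ℝ (Fin d) =>
      g₁ p.1 p.2)
    (hg₂meas : Measurable fun p : EuclideanSpace ℝ (Fin d) × EuclideanSpace ℝ (Fin d) =>
      g₂ p.1 p.2)
    {A B : ℝ} (hg₁ : ∀ y η, |g₁ y η| ≤ A) (hg₂ : ∀ y η, |g₂ y η| ≤ B) :
    Integrable (fun p => harT K ρ g₁ p.1 p.2 * g₂ p.1 p.2) m := by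
  simp only [harT_eq_lineAverage]
  exact integrable_lineAverage_mul (Set.indicator_nonneg fun y _ => hρ0 y)
    (hρmeas.indicator hK) hg₁meas hg₂meas hg₁ hg₂

theorem harT_selfAdjoint_general (ν : Measure (EuclideanSpace ℝ (Fin d)))
    (hν : ν (sphere 0 1) ≠ ∞) (hK : MeasurableSet K) (hρ0 : ∀ y, 0 ≤ ρ y)
    (hρmeas : Measurable ρ) (hρint : IntegrableOn ρ K volume) (hρpos : 0 < ∫ x in K, ρ x)
    {g₁ g₂ : EuclideanSpace ℝ (Fin d) → EuclideanSpace ℝ (Fin d) → ℝ}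
    (hg₁meas : Measurable fun p : EuclideanSpace ℝ (Fin d) × EuclideanSpace ℝ (Fin d) =>
      g₁ p.1 p.2)
    (hg₂meas : Measurable fun p : EuclideanSpace ℝ (Fin d) × EuclideanSpace ℝ (Fin d) =>
      g₂ p.1 p.2)
    (hg₁bd : ∃ C : ℝ, ∀ y η, |g₁ y η| ≤ C) (hg₂bd : ∃ C : ℝ, ∀ y η, |g₂ y η| ≤ C) :
    ∫ x, (∫ θ in sphere 0 1, harT K ρ g₁ x θ * g₂ x θ ∂ν) ∂(piMeasure K ρ) =
      ∫ x, (∫ θ in sphere 0 1, g₁ x θ * harT K ρ g₂ x θ ∂ν) ∂(piMeasure K ρ) := by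
  have := isProbabilityMeasure_piMeasure hρ0 hρint hρpos
  have := isFiniteMeasure_restrict.2 hν
  obtain ⟨A, hA⟩ := hg₁bd
  obtain ⟨B, hB⟩ := hg₂bd
  calc ∫ x, (∫ θ in sphere 0 1, harT K ρ g₁ x θ * g₂ x θ ∂ν) ∂(piMeasure K ρ)
      = ∫ θ in sphere 0 1, (∫ x, harT K ρ g₁ x θ * g₂ x θ ∂(piMeasure K ρ)) ∂ν :=
        integral_integral_swap (integrable_harT_mul hK hρ0 hρmeas hg₁meas hg₂meas hA hB)
    _ = ∫ θ in sphere 0 1, (∫ x, g₁ x θ * harT K ρ g₂ x θ ∂(piMeasure K ρ)) ∂ν := by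
        congr 1 with θ
        exact integral_harT_mul_comm hK hρ0 hρmeas hρint
          (hg₁meas.comp measurable_prodMk_right) (hg₂meas.comp measurable_prodMk_right)
          (hA · θ) (hB · θ)
    _ = ∫ x, (∫ θ in sphere 0 1, g₁ x θ * harT K ρ g₂ x θ ∂ν) ∂(piMeasure K ρ) := by
        simp only [mul_comm (g₁ _ _)]
        exact (integral_integral_swap
          (integrable_harT_mul hK hρ0 hρmeas hg₂meas hg₁meas hB hA)).symm

end HitAndRun

/-- The chord-averaging operator `T` of the hit-and-run chain is
self-adjoint on `L₂(μ)`: for all bounded measurable `g₁, g₂`,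
`⟨Tg₁, g₂⟩_μ = ⟨g₁, Tg₂⟩_μ`, where
`⟨g₁,g₂⟩_μ = κ_d⁻¹ ∫_K ∫_{S^{d-1}} g₁(x,θ) g₂(x,θ) dθ dπ(x)`. -/
theorem harT_selfAdjoint {d : ℕ} (K : Set (EuclideanSpace ℝ (Fin d)))
    (hK : MeasurableSet K) (hKint : (interior K).Nonempty)
    (ρ : EuclideanSpace ℝ (Fin d) → ℝ) (hρ0 : ∀ y, 0 ≤ ρ y)
    (hρmeas : Measurable ρ) (hρint : IntegrableOn ρ K volume)
    (hρpos : 0 < ∫ x in K, ρ x)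
    (hℓ : ∀ᵐ x ∂(piMeasure K ρ), ∀ᵐ θ ∂(sphereMeasure d),
      0 < chordWeight K ρ x θ ∧
        Integrable (fun s : ℝ => Set.indicator K ρ (x + s • θ)) volume)
    (g₁ g₂ : EuclideanSpace ℝ (Fin d) → EuclideanSpace ℝ (Fin d) → ℝ)
    (hg₁meas : Measurable fun p : EuclideanSpace ℝ (Fin d) × EuclideanSpace ℝ (Fin d) =>
      g₁ p.1 p.2)
    (hg₂meas : Measurable fun p : EuclideanSpace ℝ (Fin d) × EuclideanSpace ℝ (Fin d) =>
      g₂ p.1 p.2)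
    (hg₁bd : ∃ C : ℝ, ∀ y η, |g₁ y η| ≤ C)
    (hg₂bd : ∃ C : ℝ, ∀ y η, |g₂ y η| ≤ C) :
    (kappa d)⁻¹ *
        ∫ x, (∫ θ, harT K ρ g₁ x θ * g₂ x θ ∂(sphereMeasure d)) ∂(piMeasure K ρ) =
      (kappa d)⁻¹ *
        ∫ x, (∫ θ, g₁ x θ * harT K ρ g₂ x θ ∂(sphereMeasure d)) ∂(piMeasure K ρ) :=
  congrArg _ (harT_selfAdjoint_general μH[(d : ℝ) - 1]
    (by simpa using (hausdorffMeasure_sphere_lt_top (E := EuclideanSpace ℝ (Fin d))).ne)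
    hK hρ0 hρmeas hρint hρpos hg₁meas hg₂meas hg₁bd hg₂bd)
end

section
/- The slice-sampler representation of the Metropolis algorithm: with R_t(x,A) = B(x, A ∩ K(t)) + (1 − B(x, K(t))) 1_A(x), the slice sampler operator equals the Metropolis operator, i.e. for every bounded measurable f : K → ℝ and every x ∈ K with ρ(x) > 0, ρ(x)^{-1} ∫_0^{ρ(x)} ∫_{K(t)} f(y) R_t(x,dy) dt = ∫_K f(y) α(x,y) B(x,dy) + (1 − ∫_K α(x,y) B(x,dy)) f(x), where α(x,y) = min(1, ρ(y)/ρ(x)). -/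
open MeasureTheory

/-- The level set `K(t) = {x ∈ K : ρ(x) ≥ t}` of the density `ρ`. -/
def levelSet {d : ℕ} (K : Set (EuclideanSpace ℝ (Fin d)))
    (ρ : EuclideanSpace ℝ (Fin d) → ℝ) (t : ℝ) : Set (EuclideanSpace ℝ (Fin d)) :=
  {x | x ∈ K ∧ t ≤ ρ x}

/-- The kernel `R_t(x,A) = B(x, A ∩ K(t)) + (1 − B(x, K(t))) 1_A(x)`. -/
noncomputable def restrictKernel {d : ℕ}
    (B : EuclideanSpace ℝ (Fin d) → Measure (EuclideanSpace ℝ (Fin d)))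
    (A : Set (EuclideanSpace ℝ (Fin d))) (x : EuclideanSpace ℝ (Fin d)) :
    Measure (EuclideanSpace ℝ (Fin d)) :=
  (B x).restrict A + (1 - B x A) • Measure.dirac x

/-! Rejected mass stays at `x`, so both operators take `f` to `f x` plus the integral of `f y - f x`
over the accepted proposals `y`. For a level `t` uniform on `(0, ρ x]`, the proposal `y` is accepted
with probability `P(t ≤ ρ y) = min 1 (ρ y / ρ x)`, and Fubini's theorem exchanges the average over
`t` with the integral over `y`. -/

theorem setIntegral_Ioc_indicator_Iic_const {F : Type*} [NormedAddCommGroup F] [NormedSpace ℝ F]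
    [CompleteSpace F] {r a : ℝ} (hr : 0 ≤ r) (ha : 0 ≤ a) (c : F) :
    ∫ t in Set.Ioc 0 r, (Set.Iic a).indicator (fun _ ↦ c) t = min r a • c := by
  rw [setIntegral_indicator measurableSet_Iic, setIntegral_const, Set.Ioc_inter_Iic,
    Real.volume_real_Ioc_of_le (le_min hr ha), sub_zero]

theorem integrable_indicator_superlevel_prod {E F : Type*} [MeasurableSpace E]
    [NormedAddCommGroup F] {ν : Measure ℝ} [IsFiniteMeasure ν] {μ : Measure E} [SFinite μ]
    {ρ : E → ℝ} {f : E → F} (hρ : Measurable ρ) (hf : Integrable f μ) :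
    Integrable (fun p : ℝ × E ↦ {y | p.1 ≤ ρ y}.indicator f p.2) (ν.prod μ) :=
  (hf.comp_snd ν).indicator (measurableSet_le measurable_fst (hρ.comp measurable_snd))

section

variable {E F : Type*} [MeasurableSpace E] [NormedAddCommGroup F] [NormedSpace ℝ F]
  {μ : Measure E} {ρ : E → ℝ} {f : E → F} {r : ℝ}

theorem intervalIntegrable_setIntegral_superlevel [SFinite μ] (hρ : Measurable ρ)
    (hf : Integrable f μ) (a b : ℝ) :
    IntervalIntegrable (fun t ↦ ∫ y in {y | t ≤ ρ y}, f y ∂μ) volume a b := by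
  simp only [← integral_indicator (measurableSet_le measurable_const hρ)]
  constructor <;> exact (integrable_indicator_superlevel_prod hρ hf).integral_prod_left

theorem intervalIntegral_setIntegral_superlevel [CompleteSpace F] [SFinite μ]
    (hρ : Measurable ρ) (hρ0 : 0 ≤ᵐ[μ] ρ) (hf : Integrable f μ) (hr : 0 ≤ r) :
    ∫ t in (0 : ℝ)..r, ∫ y in {y | t ≤ ρ y}, f y ∂μ = ∫ y, min r (ρ y) • f y ∂μ := by
  calc ∫ t in (0 : ℝ)..r, ∫ y in {y | t ≤ ρ y}, f y ∂μ
      = ∫ t in Set.Ioc 0 r, ∫ y, {y | t ≤ ρ y}.indicator f y ∂μ := by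
        simp only [intervalIntegral.integral_of_le hr,
          integral_indicator (measurableSet_le measurable_const hρ)]
    _ = ∫ y, (∫ t in Set.Ioc 0 r, {z | t ≤ ρ z}.indicator f y) ∂μ :=
        integral_integral_swap (integrable_indicator_superlevel_prod hρ hf)
    _ = ∫ y, min r (ρ y) • f y ∂μ :=
        integral_congr_ae <| hρ0.mono fun y hy ↦ setIntegral_Ioc_indicator_Iic_const hr hy (f y)

theorem inv_smul_intervalIntegral_setIntegral_superlevel [CompleteSpace F] [SFinite μ]
    (hρ : Measurable ρ) (hρ0 : 0 ≤ᵐ[μ] ρ) (hf : Integrable f μ) (hr : 0 < r) :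
    r⁻¹ • ∫ t in (0 : ℝ)..r, ∫ y in {y | t ≤ ρ y}, f y ∂μ = ∫ y, min 1 (ρ y / r) • f y ∂μ := by
  have hmin (a : ℝ) : r⁻¹ * min r a = min 1 (a / r) := by
    rw [mul_min_of_nonneg _ _ (inv_nonneg.mpr hr.le), inv_mul_cancel₀ hr.ne', inv_mul_eq_div]
  simp only [intervalIntegral_setIntegral_superlevel hρ hρ0 hf hr.le, ← integral_smul, smul_smul,
    hmin]

theorem integrable_min_one_div_smul (hρ : Measurable ρ) (hρ0 : 0 ≤ᵐ[μ] ρ) (hf : Integrable f μ)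
    (hr : 0 ≤ r) : Integrable (fun y ↦ min 1 (ρ y / r) • f y) μ := by
  refine hf.bdd_smul 1 (measurable_const.min (hρ.div_const r)).aestronglyMeasurable ?_
  filter_upwards [hρ0] with y hy
  rw [Real.norm_of_nonneg (le_min zero_le_one (div_nonneg hy hr))]
  exact min_le_left _ _

theorem integral_min_one_div_smul_sub_const [CompleteSpace F] [IsFiniteMeasure μ]
    (hρ : Measurable ρ) (hρ0 : 0 ≤ᵐ[μ] ρ) (hf : Integrable f μ) (hr : 0 ≤ r) (c : F) :
    ∫ y, min 1 (ρ y / r) • (f y - c) ∂μ =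
      ∫ y, min 1 (ρ y / r) • f y ∂μ - (∫ y, min 1 (ρ y / r) ∂μ) • c := by
  simp only [smul_sub]
  rw [integral_sub (integrable_min_one_div_smul hρ hρ0 hf hr)
    (integrable_min_one_div_smul hρ hρ0 (integrable_const c) hr), integral_smul_const]

theorem setIntegral_restrict_add_smul_dirac [CompleteSpace F] [IsProbabilityMeasure μ]
    {A : Set E} {x : E} (hA : MeasurableSet A) (hx : x ∈ A) (hfm : StronglyMeasurable f)
    (hf : IntegrableOn f A μ) :
    ∫ y in A, f y ∂(μ.restrict A + (1 - μ A) • Measure.dirac x) =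
      f x + ∫ y in A, (f y - f x) ∂μ := by
  classical
  have hdirac : Integrable f ((1 - μ A) • Measure.dirac x) :=
    (integrable_dirac' hfm enorm_lt_top).smul_measure (by finiteness)
  have hmass : (1 - μ A).toReal = 1 - μ.real A :=
    ENNReal.toReal_sub_of_le prob_le_one ENNReal.one_ne_top
  rw [Measure.restrict_add, Measure.restrict_smul, Measure.restrict_restrict hA, Set.inter_self,
    restrict_dirac' hA, if_pos hx, integral_add_measure hf hdirac, integral_smul_measure,
    integral_dirac' f x hfm, hmass, integral_sub hf (integrable_const _), setIntegral_const]
  module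

/-- The measure `μ` is the proposal law `B(x, ·)` at the single point `x`. -/
theorem slice_eq_metropolis_general [CompleteSpace F] [IsProbabilityMeasure μ] {K : Set E}
    (hK : MeasurableSet K) (hρ : Measurable ρ) (hρ0 : ∀ y ∈ K, 0 ≤ ρ y)
    (hfm : StronglyMeasurable f) (hf : IntegrableOn f K μ) {x : E} (hx : x ∈ K) (hρx : 0 < ρ x) :
    (ρ x)⁻¹ • ∫ t in (0 : ℝ)..ρ x, ∫ y in {y ∈ K | t ≤ ρ y}, f y
        ∂(μ.restrict {y ∈ K | t ≤ ρ y} + (1 - μ {y ∈ K | t ≤ ρ y}) • Measure.dirac x) =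
      ∫ y in K, min 1 (ρ y / ρ x) • f y ∂μ + (1 - ∫ y in K, min 1 (ρ y / ρ x) ∂μ) • f x := by
  have hρ0' : 0 ≤ᵐ[μ.restrict K] ρ := ae_restrict_of_forall_mem hK hρ0
  have hg : IntegrableOn (fun y ↦ f y - f x) K μ := hf.sub (integrable_const _)
  have hinner : ∀ t ∈ Set.Ioo 0 (ρ x), ∫ y in {y ∈ K | t ≤ ρ y}, f y
        ∂(μ.restrict {y ∈ K | t ≤ ρ y} + (1 - μ {y ∈ K | t ≤ ρ y}) • Measure.dirac x) =
      f x + ∫ y in {y | t ≤ ρ y}, (f y - f x) ∂(μ.restrict K) := by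
    intro t ht
    have hlevel : MeasurableSet {y | t ≤ ρ y} := measurableSet_le measurable_const hρ
    have hlevelK : MeasurableSet {y ∈ K | t ≤ ρ y} := hK.inter hlevel
    rw [setIntegral_restrict_add_smul_dirac hlevelK ⟨hx, ht.2.le⟩ hfm
      (hf.mono_set (Set.sep_subset _ _)), Measure.restrict_restrict hlevel,
      Set.ofPred_inter_eq_sep]
  rw [intervalIntegral.integral_congr_Ioo_of_le hρx.le hinner, intervalIntegral.integral_add
      intervalIntegrable_const (intervalIntegrable_setIntegral_superlevel hρ hg _ _), smul_add,
    inv_smul_intervalIntegral_setIntegral_superlevel hρ hρ0' hg hρx,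
    integral_min_one_div_smul_sub_const hρ hρ0' hf hρx.le, intervalIntegral.integral_const,
    sub_zero, inv_smul_smul₀ hρx.ne']
  module

end

/-- The slice-sampler representation of the Metropolis algorithm:
with `R_t(x,A) = B(x, A ∩ K(t)) + (1 − B(x, K(t))) 1_A(x)`, the slice sampler
operator equals the Metropolis operator, i.e. for every bounded measurable
`f : K → ℝ` and every `x ∈ K` with `ρ(x) > 0`,
`ρ(x)⁻¹ ∫_0^{ρ(x)} ∫_{K(t)} f(y) R_t(x,dy) dt`
`= ∫_K f(y) α(x,y) B(x,dy) + (1 − ∫_K α(x,y) B(x,dy)) f(x)`,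
where `α(x,y) = min(1, ρ(y)/ρ(x))`. -/
theorem slice_eq_metropolis {d : ℕ}
    (K : Set (EuclideanSpace ℝ (Fin d)))
    (hKbd : Bornology.IsBounded K) (hK : MeasurableSet K)
    (hKint : (interior K).Nonempty)
    (ρ : EuclideanSpace ℝ (Fin d) → ℝ) (hρ0 : ∀ z, 0 ≤ ρ z)
    (hρmeas : Measurable ρ) (hρint : IntegrableOn ρ K volume)
    (B : EuclideanSpace ℝ (Fin d) → Measure (EuclideanSpace ℝ (Fin d)))
    (hBmeas : Measurable B)
    (hBprob : ∀ x, IsProbabilityMeasure (B x))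
    (hBsupp : ∀ x ∈ K, B x Kᶜ = 0)
    (f : EuclideanSpace ℝ (Fin d) → ℝ)
    (hfmeas : Measurable f) (hfbd : ∃ C : ℝ, ∀ y, |f y| ≤ C)
    (x : EuclideanSpace ℝ (Fin d)) (hx : x ∈ K) (hρx : 0 < ρ x) :
    (ρ x)⁻¹ * ∫ t in (0:ℝ)..(ρ x),
        ∫ y in levelSet K ρ t, f y ∂(restrictKernel B (levelSet K ρ t) x) =
      (∫ y, f y * min 1 (ρ y / ρ x) ∂(B x)) +
        (1 - ∫ y, min 1 (ρ y / ρ x) ∂(B x)) * f x := by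
  obtain ⟨C, hC⟩ := hfbd
  have hf : Integrable f (B x) := .of_bound hfmeas.aestronglyMeasurable C (.of_forall hC)
  simpa only [levelSet, restrictKernel, smul_eq_mul, mul_comm (f _),
      Measure.restrict_eq_self_of_ae_mem (hBsupp x hx)] using
    slice_eq_metropolis_general hK hρmeas (fun y _ ↦ hρ0 y) hfmeas.stronglyMeasurable
      hf.integrableOn hx hρx
end

section
/- Positivity of the independent Metropolis algorithm: let B(x,·) = ν(·) for all x ∈ K, where ν is a probability measure on K equal to U_0, the uniform distribution on K. Then the independent Metropolis operator Mf(x) = ∫_K f(y) α(x,y) ν(dy) + (1 − ∫_K α(x,y) ν(dy)) f(x), with α(x,y) = min(1, ρ(y)/ρ(x)), is positive on L₂(π): ∫_K Mf(x) f(x) dπ(x) ≥ 0 for every bounded measurable f : K → ℝ. -/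
/-!
Acceptance turns the density `ρ` into the symmetric kernel `ρ x * α x y = min (ρ x) (ρ y)`, which is
the Gram kernel of the vectors `e (ρ x)`, where `e t` is the indicator of `(0, t]` in `L²(ℝ)`. The
proposal part of `⟪M f, f⟫` is therefore the square `‖∫ f x • e (ρ x) ∂ν‖ ^ 2`, while the rejection
part is the integral of `f ^ 2` against a nonnegative weight.
-/

open MeasureTheory

/-- The uniform distribution `U_0` on `K`. -/
noncomputable def unifK {d : ℕ} (K : Set (EuclideanSpace ℝ (Fin d))) :
    Measure (EuclideanSpace ℝ (Fin d)) :=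
  (volume K)⁻¹ • volume.restrict K

/-- The Markov operator of the independent Metropolis algorithm with constant
proposal `ν = U_0`:
`M f (x) = ∫_K f(y) α(x,y) ν(dy) + (1 − ∫_K α(x,y) ν(dy)) f(x)`, where
`α(x,y) = min(1, ρ(y)/ρ(x))`. -/
noncomputable def indepMetropolisOp {d : ℕ} (K : Set (EuclideanSpace ℝ (Fin d)))
    (ρ : EuclideanSpace ℝ (Fin d) → ℝ) (f : EuclideanSpace ℝ (Fin d) → ℝ)
    (x : EuclideanSpace ℝ (Fin d)) : ℝ :=
  (∫ y, f y * min 1 (ρ y / ρ x) ∂(unifK K)) +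
    (1 - ∫ y, min 1 (ρ y / ρ x) ∂(unifK K)) * f x

open scoped NNReal ENNReal RealInnerProductSpace

section IntervalIndicator

/-- The indicator of `(0, t]` as a vector of `L²(ℝ)`. It is a feature map for the kernel `min`,
which is what makes that kernel positive semidefinite. -/
noncomputable def intervalIndicator (t : ℝ≥0) : Lp ℝ 2 (volume : Measure ℝ) :=
  indicatorConstLp 2 (measurableSet_Ioc (a := (0 : ℝ)) (b := t)) measure_Ioc_lt_top.ne 1

theorem inner_intervalIndicator (s t : ℝ≥0) :
    ⟪intervalIndicator s, intervalIndicator t⟫ = min (s : ℝ) t := by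
  rw [intervalIndicator, intervalIndicator,
    L2.real_inner_indicatorConstLp_one_indicatorConstLp_one _ _ measure_Ioc_lt_top.ne
      measure_Ioc_lt_top.ne,
    Set.Ioc_inter_Ioc, max_self, Real.volume_real_Ioc_of_le (by positivity), sub_zero]

theorem norm_intervalIndicator_sq (t : ℝ≥0) : ‖intervalIndicator t‖ ^ 2 = t := by
  rw [← real_inner_self_eq_norm_sq, inner_intervalIndicator, min_self]

theorem intervalIndicator_zero : intervalIndicator 0 = 0 := by
  simpa using norm_intervalIndicator_sq 0

theorem norm_intervalIndicator_sub_sq (s t : ℝ≥0) :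
    ‖intervalIndicator s - intervalIndicator t‖ ^ 2 = dist s t := by
  rw [norm_sub_sq_real, norm_intervalIndicator_sq, norm_intervalIndicator_sq,
    inner_intervalIndicator, NNReal.dist_eq, ← max_sub_min_eq_abs']
  linarith [min_add_max (s : ℝ) t]

theorem continuous_intervalIndicator : Continuous intervalIndicator := by
  refine continuous_iff_continuousAt.2 fun t ↦ tendsto_iff_dist_tendsto_zero.2 ?_
  have dist_eq (s : ℝ≥0) : dist (intervalIndicator s) (intervalIndicator t) = √(dist s t) := by
    rw [← norm_intervalIndicator_sub_sq, Real.sqrt_sq (norm_nonneg _), dist_eq_norm]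
  have : Continuous fun s ↦ √(dist s t) := by fun_prop
  simpa [dist_eq] using this.tendsto t

end IntervalIndicator

section Metropolis

variable {X : Type*}

/-- The probability `α(x, y)` that the Metropolis algorithm with unnormalised target density `ρ`
accepts a move from `x` to `y`. Division by zero makes it `0` where `ρ x = 0`, a null set for the
target distribution. -/
noncomputable def acceptProb (ρ : X → ℝ≥0) (x y : X) : ℝ :=
  min 1 (ρ y / ρ x)

theorem acceptProb_nonneg (ρ : X → ℝ≥0) (x y : X) : 0 ≤ acceptProb ρ x y := by
  unfold acceptProb
  positivity

theorem acceptProb_le_one (ρ : X → ℝ≥0) (x y : X) : acceptProb ρ x y ≤ 1 :=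
  min_le_left _ _

theorem mul_acceptProb (ρ : X → ℝ≥0) (x y : X) :
    ρ x * acceptProb ρ x y = min (ρ x : ℝ) (ρ y) := by
  rcases eq_or_ne (ρ x) 0 with hx | hx
  · simp [hx]
  · rw [acceptProb, mul_min_of_nonneg _ _ (ρ x).coe_nonneg, mul_one,
      mul_div_cancel₀ _ (mod_cast hx)]

variable [MeasurableSpace X] {ν : Measure X} {ρ : X → ℝ≥0} {f : X → ℝ}

/-- The probability that the proposal drawn from `ν` at state `x` is rejected. -/
noncomputable def rejectProb (ν : Measure X) (ρ : X → ℝ≥0) (x : X) : ℝ :=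
  1 - ∫ y, acceptProb ρ x y ∂ν

/-- The Markov operator of the independent Metropolis algorithm on an arbitrary measurable space,
with proposal distribution `ν` and target density proportional to `ρ` with respect to `ν`. -/
noncomputable def metropolisOp (ν : Measure X) (ρ : X → ℝ≥0) (f : X → ℝ) (x : X) : ℝ :=
  (∫ y, f y * acceptProb ρ x y ∂ν) + rejectProb ν ρ x * f x

theorem measurable_rejectProb [SFinite ν] (hρ : Measurable ρ) : Measurable (rejectProb ν ρ) := by
  have accept : Measurable fun p : X × X ↦ acceptProb ρ p.1 p.2 := by
    unfold acceptProb
    fun_prop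
  exact measurable_const.sub accept.stronglyMeasurable.integral_prod_right.measurable

theorem rejectProb_mem_Icc [IsProbabilityMeasure ν] (ρ : X → ℝ≥0) (x : X) :
    rejectProb ν ρ x ∈ Set.Icc 0 1 := by
  have nonneg : 0 ≤ ∫ y, acceptProb ρ x y ∂ν := integral_nonneg (acceptProb_nonneg ρ x)
  have le_one : ∫ y, acceptProb ρ x y ∂ν ≤ 1 := by
    simpa using integral_mono_of_nonneg (μ := ν) (.of_forall (acceptProb_nonneg ρ x))
      (integrable_const 1) (.of_forall (acceptProb_le_one ρ x))
  exact ⟨sub_nonneg.2 le_one, sub_le_self _ nonneg⟩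

theorem aestronglyMeasurable_smul_intervalIndicator (hρ : Measurable ρ)
    (hf : AEStronglyMeasurable f (ν.withDensity fun x ↦ ρ x)) :
    AEStronglyMeasurable (fun x ↦ f x • intervalIndicator (ρ x)) ν := by
  have density_smul : AEStronglyMeasurable (fun x ↦ (ρ x : ℝ) • f x) ν :=
    (aestronglyMeasurable_withDensity_iff hρ).1 hf
  have inv_smul : AEStronglyMeasurable (fun x ↦ (ρ x : ℝ)⁻¹ • intervalIndicator (ρ x)) ν :=
    hρ.coe_nnreal_real.inv.aestronglyMeasurable.smul
      (continuous_intervalIndicator.comp_aestronglyMeasurable hρ.aestronglyMeasurable)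
  refine (density_smul.smul inv_smul).congr (.of_forall fun x ↦ ?_)
  rcases eq_or_ne (ρ x) 0 with hx | hx
  · simp [hx, intervalIndicator_zero]
  · have hx' : (ρ x : ℝ) ≠ 0 := mod_cast hx
    rw [Pi.smul_apply', smul_smul, smul_eq_mul, mul_right_comm, mul_inv_cancel₀ hx', one_mul]

theorem integrable_smul_intervalIndicator [IsFiniteMeasure ν] (hρ : Measurable ρ)
    (hf : MemLp f 2 (ν.withDensity fun x ↦ ρ x)) :
    Integrable (fun x ↦ f x • intervalIndicator (ρ x)) ν := by
  have sq_integrable : Integrable (fun x ↦ ρ x • f x ^ 2) ν :=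
    (integrable_withDensity_iff_integrable_smul hρ).1 hf.integrable_sq
  refine ((integrable_const 1).add sq_integrable).mono'
    (aestronglyMeasurable_smul_intervalIndicator hρ hf.1) (.of_forall fun x ↦ ?_)
  have norm_sq : ‖f x • intervalIndicator (ρ x)‖ ^ 2 = ρ x • f x ^ 2 := by
    rw [norm_smul, mul_pow, norm_intervalIndicator_sq, Real.norm_eq_abs, sq_abs, mul_comm,
      NNReal.smul_def, smul_eq_mul]
  rw [Pi.add_apply, ← norm_sq]
  nlinarith [sq_nonneg (‖f x • intervalIndicator (ρ x)‖ - 1)]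

theorem density_smul_integral_mul_acceptProb
    (hw : Integrable (fun x ↦ f x • intervalIndicator (ρ x)) ν) (x : X) :
    ρ x • ((∫ y, f y * acceptProb ρ x y ∂ν) * f x) =
      ⟪f x • intervalIndicator (ρ x), ∫ y, f y • intervalIndicator (ρ y) ∂ν⟫ := by
  rw [← integral_inner hw, NNReal.smul_def, smul_eq_mul, ← integral_mul_const,
    ← integral_const_mul]
  congr with y
  rw [real_inner_smul_left, real_inner_smul_right, inner_intervalIndicator, ← mul_acceptProb]
  ring

theorem integrable_integral_mul_acceptProb_mul (hρ : Measurable ρ)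
    (hw : Integrable (fun x ↦ f x • intervalIndicator (ρ x)) ν) :
    Integrable (fun x ↦ (∫ y, f y * acceptProb ρ x y ∂ν) * f x) (ν.withDensity fun x ↦ ρ x) := by
  rw [integrable_withDensity_iff_integrable_smul hρ]
  simp only [density_smul_integral_mul_acceptProb hw]
  exact hw.inner_const _

theorem integral_integral_mul_acceptProb_mul (hρ : Measurable ρ)
    (hw : Integrable (fun x ↦ f x • intervalIndicator (ρ x)) ν) :
    ∫ x, (∫ y, f y * acceptProb ρ x y ∂ν) * f x ∂(ν.withDensity fun x ↦ ρ x) =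
      ‖∫ x, f x • intervalIndicator (ρ x) ∂ν‖ ^ 2 := by
  rw [integral_withDensity_eq_integral_smul hρ]
  simp only [density_smul_integral_mul_acceptProb hw,
    real_inner_comm (∫ y, f y • intervalIndicator (ρ y) ∂ν)]
  rw [integral_inner hw, real_inner_self_eq_norm_sq]

theorem integrable_rejectProb_mul_sq [IsProbabilityMeasure ν] {π : Measure X} (hρ : Measurable ρ)
    (hf : MemLp f 2 π) : Integrable (fun x ↦ rejectProb ν ρ x * f x ^ 2) π := by
  refine hf.integrable_sq.bdd_mul (c := 1) (measurable_rejectProb hρ).aestronglyMeasurable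
    (.of_forall fun x ↦ ?_)
  obtain ⟨nonneg, le_one⟩ := rejectProb_mem_Icc (ν := ν) ρ x
  rwa [Real.norm_of_nonneg nonneg]

theorem integral_metropolisOp_mul_self [IsProbabilityMeasure ν] (hρ : Measurable ρ)
    (hf : MemLp f 2 (ν.withDensity fun x ↦ ρ x)) :
    ∫ x, metropolisOp ν ρ f x * f x ∂(ν.withDensity fun x ↦ ρ x) =
      ‖∫ x, f x • intervalIndicator (ρ x) ∂ν‖ ^ 2 +
        ∫ x, rejectProb ν ρ x * f x ^ 2 ∂(ν.withDensity fun x ↦ ρ x) := by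
  have hw := integrable_smul_intervalIndicator hρ hf
  rw [← integral_integral_mul_acceptProb_mul hρ hw,
    ← integral_add (integrable_integral_mul_acceptProb_mul hρ hw)
      (integrable_rejectProb_mul_sq hρ hf)]
  congr with x
  rw [metropolisOp]
  ring

theorem indepMetropolis_positive_general [IsProbabilityMeasure ν] (hρ : Measurable ρ)
    (hf : MemLp f 2 (ν.withDensity fun x ↦ ρ x)) :
    0 ≤ ∫ x, metropolisOp ν ρ f x * f x ∂(ν.withDensity fun x ↦ ρ x) := by
  rw [integral_metropolisOp_mul_self hρ hf]
  exact add_nonneg (sq_nonneg _) <| integral_nonneg fun x ↦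
    mul_nonneg (rejectProb_mem_Icc ρ x).1 (sq_nonneg _)

end Metropolis

section Uniform

variable {d : ℕ} {K : Set (EuclideanSpace ℝ (Fin d))}

theorem isProbabilityMeasure_unifK (hK₀ : volume K ≠ 0) (hK : volume K ≠ ∞) :
    IsProbabilityMeasure (unifK K) :=
  ProbabilityTheory.cond_isProbabilityMeasure_of_finite hK₀ hK

theorem piMeasure_eq_smul_withDensity_unifK (hK₀ : volume K ≠ 0) (hK : volume K ≠ ∞)
    (ρ : EuclideanSpace ℝ (Fin d) → ℝ≥0) :
    piMeasure K (fun x ↦ ρ x) =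
      ((∫⁻ x in K, ρ x)⁻¹ * volume K) • (unifK K).withDensity fun x ↦ ρ x := by
  simp only [piMeasure, unifK, withDensity_smul_measure, smul_smul, mul_assoc,
    ENNReal.mul_inv_cancel hK₀ hK, mul_one, ENNReal.ofReal_coe_nnreal]

theorem memLp_withDensity_unifK_of_bounded {p : ℝ≥0∞} {ρ : EuclideanSpace ℝ (Fin d) → ℝ≥0}
    {f : EuclideanSpace ℝ (Fin d) → ℝ} (hK₀ : volume K ≠ 0)
    (hρ : IntegrableOn (fun x ↦ (ρ x : ℝ)) K) (hf : Measurable f) (hfbd : ∃ C, ∀ x, |f x| ≤ C) :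
    MemLp f p ((unifK K).withDensity fun x ↦ ρ x) := by
  obtain ⟨C, hC⟩ := hfbd
  have integrable_density : Integrable (fun x ↦ (ρ x : ℝ)) (unifK K) :=
    hρ.smul_measure (ENNReal.inv_ne_top.2 hK₀)
  have : IsFiniteMeasure ((unifK K).withDensity fun x ↦ ρ x) := by
    simpa using isFiniteMeasure_withDensity_ofReal integrable_density.2
  exact .of_bound hf.aestronglyMeasurable C (.of_forall hC)

end Uniform

/-- Positivity of the independent Metropolis algorithm: with the
constant proposal kernel `B(x,·) = U_0(·)`, the uniform distribution on `K`, the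
independent Metropolis operator is positive on `L₂(π)`:
`∫_K Mf(x) f(x) dπ(x) ≥ 0` for every bounded measurable `f : K → ℝ`. -/
theorem indepMetropolis_positive {d : ℕ}
    (K : Set (EuclideanSpace ℝ (Fin d)))
    (hKbd : Bornology.IsBounded K) (hK : MeasurableSet K)
    (hKint : (interior K).Nonempty)
    (ρ : EuclideanSpace ℝ (Fin d) → ℝ) (hρ0 : ∀ z, 0 ≤ ρ z)
    (hρK : ∀ x ∈ K, 0 < ρ x)
    (hρmeas : Measurable ρ) (hρint : IntegrableOn ρ K volume)
    (hρpos : 0 < ∫ x in K, ρ x)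
    (f : EuclideanSpace ℝ (Fin d) → ℝ)
    (hfmeas : Measurable f) (hfbd : ∃ C : ℝ, ∀ y, |f y| ≤ C) :
    0 ≤ ∫ x, indepMetropolisOp K ρ f x * f x ∂(piMeasure K ρ) := by
  have hK₀ : volume K ≠ 0 := (Measure.measure_pos_of_nonempty_interior volume hKint).ne'
  have hK_top : volume K ≠ ∞ := hKbd.measure_lt_top.ne
  have := isProbabilityMeasure_unifK hK₀ hK_top
  lift ρ to EuclideanSpace ℝ (Fin d) → ℝ≥0 using hρ0
  rw [piMeasure_eq_smul_withDensity_unifK hK₀ hK_top, integral_smul_measure]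
  exact smul_nonneg ENNReal.toReal_nonneg <| indepMetropolis_positive_general
    (measurable_coe_nnreal_real_iff.1 hρmeas)
    (memLp_withDensity_unifK_of_bounded hK₀ hρint hfmeas hfbd)
end
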